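/- arXiv:2203.02663 — 5 statements merged into one kernel-verified Lean document; each statement's English description precedes it below -/
import Mathlib

section
/- (Theorem 2.1(a), transformation part.) Let q, r : ℝ → ℂ with q continuous, r continuously differentiable, and q·r Lebesgue integrable on every interval (−∞, x]. Define E(x) := exp((i/2)∫_{−∞}^x q(t)r(t) dt), u(x) := q(x)·E(x)^{−2}, and v(x) := (−(i/2)r'(x) + (1/4)q(x)r(x)²)·E(x)². Let ζ ∈ ℂ and λ := ζ². If (ξ, η) : ℝ → ℂ² is a differentiable pair satisfying the AKNS system ξ'(x) = −iλ·ξ(x) + u(x)·η(x), η'(x) = v(x)·ξ(x) + iλ·η(x) for all x, then the pair α(x) := ζ·E(x)·ξ(x), β(x) := (i/2)·r(x)·E(x)·ξ(x) + E(x)^{−1}·η(x) is a solution of system (1.1) with potentials q, r and spectral parameter ζ. -/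
open MeasureTheory

/-- The quantity E(x) = exp((i/2)∫_{-∞}^x q r) from (2.18). -/
noncomputable def Epot (q r : ℝ → ℂ) (x : ℝ) : ℂ :=
  Complex.exp ((Complex.I / 2) * ∫ t in Set.Iic x, q t * r t)

/-!
The change of unknowns `(ξ, η) ↦ (α, β)` is a composite of three elementary ones. Since
`E' = (i/2) q r E`, the gauge `(ξ, η) ↦ (E ξ, E⁻¹ η)` removes the powers of `E` from the
off-diagonal coefficients and adds `± (i/2) q r` to the diagonal ones. The shear
`(y, z) ↦ (y, (i/2) r y + z)` removes these diagonal terms again and turns the lower left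
coefficient into `ζ² r`. Finally, multiplying the first unknown by `ζ` distributes this factor `ζ²`
evenly over the two off-diagonal coefficients.
-/

theorem hasDerivAt_integral_Iic {F : Type*} [NormedAddCommGroup F] [NormedSpace ℝ F]
    [CompleteSpace F] {f : ℝ → F} {x b : ℝ} (hf : IntegrableOn f (Set.Iic b)) (hxb : x < b)
    (hfx : ContinuousAt f x) :
    HasDerivAt (fun y => ∫ t in Set.Iic y, f t) (f x) x := by
  have hIic : Set.Iic b ∈ nhds x := Iic_mem_nhds hxb
  have integral_split : (fun y => ∫ t in Set.Iic y, f t) =ᶠ[nhds x]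
      fun y => (∫ t in Set.Iic x, f t) + ∫ t in x..y, f t := by
    filter_upwards [hIic] with y hyb
    rw [← intervalIntegral.integral_Iic_sub_Iic (hf.mono_set (Set.Iic_subset_Iic.2 hxb.le))
      (hf.mono_set (Set.Iic_subset_Iic.2 hyb)), add_sub_cancel]
  have hasDerivAt_interval : HasDerivAt (fun y => ∫ t in x..y, f t) (f x) x :=
    intervalIntegral.integral_hasDerivAt_right .refl ⟨_, hIic, hf.aestronglyMeasurable⟩ hfx
  exact (hasDerivAt_interval.const_add _).congr_of_eventuallyEq integral_split

theorem Epot_ne_zero (q r : ℝ → ℂ) (x : ℝ) : Epot q r x ≠ 0 :=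
  Complex.exp_ne_zero _

theorem hasDerivAt_Epot {q r : ℝ → ℂ} {x b : ℝ}
    (hqr : IntegrableOn (fun t => q t * r t) (Set.Iic b)) (hxb : x < b)
    (hqrx : ContinuousAt (fun t => q t * r t) x) :
    HasDerivAt (Epot q r) (Complex.I / 2 * (q x * r x) * Epot q r x) x :=
  ((hasDerivAt_integral_Iic hqr hxb hqrx).const_mul (Complex.I / 2)).cexp.congr_deriv
    (mul_comm _ _)

/-- The pair `(y, z)` satisfies the homogeneous linear system `y' = a y + b z`, `z' = c y + d z` at
the point `x`, where `a`, `b`, `c`, `d` are the values of the coefficients at `x`. Both the AKNS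
system and system (1.1) are of this form. -/
def IsLinearSystemSolutionAt {𝕜 𝔸 : Type*} [NontriviallyNormedField 𝕜] [NormedRing 𝔸]
    [NormedAlgebra 𝕜 𝔸] (a b c d : 𝔸) (y z : 𝕜 → 𝔸) (x : 𝕜) : Prop :=
  HasDerivAt y (a * y x + b * z x) x ∧ HasDerivAt z (c * y x + d * z x) x

namespace IsLinearSystemSolutionAt

variable {𝕜 : Type*} [NontriviallyNormedField 𝕜]

theorem gauge {𝔸 : Type*} [NontriviallyNormedField 𝔸] [NormedAlgebra 𝕜 𝔸] {a b c d g : 𝔸}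
    {y z e : 𝕜 → 𝔸} {x : 𝕜}
    (h : IsLinearSystemSolutionAt a (b / e x ^ 2) (c * e x ^ 2) d y z x)
    (he : HasDerivAt e (g * e x) x) (hex : e x ≠ 0) :
    IsLinearSystemSolutionAt (a + g) b c (d - g)
      (fun t => e t * y t) (fun t => (e t)⁻¹ * z t) x := by
  obtain ⟨hy, hz⟩ := h
  constructor
  · refine (he.mul hy).congr_deriv ?_
    field_simp
    ring
  · refine ((he.fun_inv hex).mul hz).congr_deriv ?_
    field_simp
    ring

variable {𝔸 : Type*} [NormedCommRing 𝔸] [NormedAlgebra 𝕜 𝔸] {a b c d : 𝔸} {y z : 𝕜 → 𝔸} {x : 𝕜}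

theorem shear {s : 𝕜 → 𝔸} {s' : 𝔸} (h : IsLinearSystemSolutionAt a b c d y z x)
    (hs : HasDerivAt s s' x) :
    IsLinearSystemSolutionAt (a - b * s x) b (s' + s x * a + c - (s x * b + d) * s x) (s x * b + d)
      y (fun t => s t * y t + z t) x := by
  obtain ⟨hy, hz⟩ := h
  exact ⟨hy.congr_deriv (by ring), ((hs.mul hy).add hz).congr_deriv (by ring)⟩

theorem const_mul_fst {k : 𝔸} (h : IsLinearSystemSolutionAt a b (c * k) d y z x) :
    IsLinearSystemSolutionAt a (k * b) c d (fun t => k * y t) z x := by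
  obtain ⟨hy, hz⟩ := h
  exact ⟨(hy.const_mul k).congr_deriv (by ring), hz.congr_deriv (by ring)⟩

end IsLinearSystemSolutionAt

theorem akns_uv_to_system11_general {q r ξ η : ℝ → ℂ} {r' ζ : ℂ} {x b : ℝ}
    (hq : ContinuousAt q x) (hr : HasDerivAt r r' x)
    (hqr : IntegrableOn (fun t => q t * r t) (Set.Iic b)) (hxb : x < b)
    (h : IsLinearSystemSolutionAt (-Complex.I * ζ ^ 2) (q x / Epot q r x ^ 2)
      ((-(Complex.I / 2) * r' + (1 / 4) * q x * r x ^ 2) * Epot q r x ^ 2) (Complex.I * ζ ^ 2)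
      ξ η x) :
    IsLinearSystemSolutionAt (-Complex.I * ζ ^ 2) (ζ * q x) (ζ * r x) (Complex.I * ζ ^ 2)
      (fun t => ζ * Epot q r t * ξ t)
      (fun t => (Complex.I / 2) * r t * Epot q r t * ξ t + (Epot q r t)⁻¹ * η t) x := by
  have hE := hasDerivAt_Epot hqr hxb (hq.mul hr.continuousAt)
  have sheared := (h.gauge hE (Epot_ne_zero q r x)).shear (hr.const_mul (Complex.I / 2))
  have upper_left : -Complex.I * ζ ^ 2 + Complex.I / 2 * (q x * r x)
      - q x * (Complex.I / 2 * r x) = -Complex.I * ζ ^ 2 := by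
    ring
  have lower_right : Complex.I / 2 * r x * q x
      + (Complex.I * ζ ^ 2 - Complex.I / 2 * (q x * r x)) = Complex.I * ζ ^ 2 := by
    ring
  have lower_left : Complex.I / 2 * r'
      + Complex.I / 2 * r x * (-Complex.I * ζ ^ 2 + Complex.I / 2 * (q x * r x))
      + (-(Complex.I / 2) * r' + (1 / 4) * q x * r x ^ 2)
      - Complex.I * ζ ^ 2 * (Complex.I / 2 * r x) = ζ * r x * ζ := by
    linear_combination (q x * r x ^ 2 / 4 - ζ ^ 2 * r x) * Complex.I_sq
  rw [lower_right, lower_left, upper_left] at sheared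
  simpa only [mul_assoc] using sheared.const_mul_fst

/-- Theorem 2.1(a), transformation part: a solution (ξ,η) of the AKNS system (1.7)
with potentials u = q E⁻², v = (-(i/2)r' + (1/4)q r²) E² is transformed into a
solution of system (1.1) via α = ζ E ξ, β = (i/2) r E ξ + E⁻¹ η. -/
theorem akns_uv_to_system11
    (q r r' : ℝ → ℂ)
    (hq : Continuous q)
    (hr : ∀ x : ℝ, HasDerivAt r (r' x) x)
    (hr' : Continuous r')
    (hqr : ∀ x : ℝ, IntegrableOn (fun t => q t * r t) (Set.Iic x))
    (ζ : ℂ) (ξ η : ℝ → ℂ)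
    (hξ : ∀ x : ℝ, HasDerivAt ξ
      (-Complex.I * ζ ^ 2 * ξ x + (q x / (Epot q r x) ^ 2) * η x) x)
    (hη : ∀ x : ℝ, HasDerivAt η
      (((-(Complex.I / 2) * r' x + (1 / 4) * q x * (r x) ^ 2) * (Epot q r x) ^ 2) * ξ x
        + Complex.I * ζ ^ 2 * η x) x) :
    ∀ x : ℝ,
      HasDerivAt (fun x => ζ * Epot q r x * ξ x)
        (-Complex.I * ζ ^ 2 * (ζ * Epot q r x * ξ x)
          + ζ * q x * ((Complex.I / 2) * r x * Epot q r x * ξ x + (Epot q r x)⁻¹ * η x)) x ∧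
      HasDerivAt (fun x => (Complex.I / 2) * r x * Epot q r x * ξ x + (Epot q r x)⁻¹ * η x)
        (ζ * r x * (ζ * Epot q r x * ξ x)
          + Complex.I * ζ ^ 2
            * ((Complex.I / 2) * r x * Epot q r x * ξ x + (Epot q r x)⁻¹ * η x)) x := by
  intro x
  exact akns_uv_to_system11_general hq.continuousAt (hr x) (hqr (x + 1)) (lt_add_one x)
    ⟨hξ x, hη x⟩
end

section
/- (Uncoupling of the Marchenko system.) Let Ω, Ω̄ : ℝ → ℂ be differentiable with derivatives Ω', Ω̄', and let K₁, K₂, K̄₁, K̄₂ : ℝ × ℝ → ℂ. Fix x < y and assume: (i) K̄₁(x, z) = i∫_x^∞ K₁(x, s)·Ω'(s + z) ds and K₂(x, z) = −i∫_x^∞ K̄₂(x, s)·Ω̄'(s + z) ds for all z > x; (ii) K₁(x, y) + Ω̄(x + y) + i∫_x^∞∫_x^∞ K₁(x, z)·Ω'(z + s)·Ω̄(s + y) ds dz = 0 and K̄₂(x, y) + Ω(x + y) − i∫_x^∞∫_x^∞ K̄₂(x, z)·Ω̄'(z + s)·Ω(s + y) ds dz = 0; (iii) the functions (z, s) ↦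 K₁(x, z)·Ω'(z + s)·Ω̄(s + y) and (z, s) ↦ K̄₂(x, z)·Ω̄'(z + s)·Ω(s + y) are Lebesgue integrable on (x, ∞) × (x, ∞). Then the remaining two equations of the coupled Marchenko system (4.40) hold at (x, y): K₁(x, y) + Ω̄(x + y) + ∫_x^∞ K̄₁(x, z)·Ω̄(z + y) dz = 0 and K̄₂(x, y) + Ω(x + y) + ∫_x^∞ K₂(x, z)·Ω(z + y) dz = 0. -/
open MeasureTheory

section Fubini

variable {α β 𝕜 : Type*} [MeasurableSpace α] [MeasurableSpace β] [RCLike 𝕜]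
  {μ : Measure α} {ν : Measure β} [SFinite μ] [SFinite ν]

theorem integral_integral_mul_swap {k : α → β → 𝕜} {f : β → 𝕜}
    (hkf : Integrable (fun p : α × β => k p.1 p.2 * f p.2) (μ.prod ν)) :
    ∫ b, (∫ a, k a b ∂μ) * f b ∂ν = ∫ a, ∫ b, k a b * f b ∂ν ∂μ :=
  calc
    ∫ b, (∫ a, k a b ∂μ) * f b ∂ν = ∫ b, ∫ a, k a b * f b ∂μ ∂ν := by
      simp only [integral_mul_const]
    _ = ∫ a, ∫ b, k a b * f b ∂ν ∂μ := (integral_integral_swap hkf).symm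

theorem setIntegral_mul_of_eq_const_mul_setIntegral {s : Set α} {t : Set β}
    (ht : MeasurableSet t) {c : 𝕜} {k : α → β → 𝕜} {f g : β → 𝕜}
    (hg : ∀ b ∈ t, g b = c * ∫ a in s, k a b ∂μ)
    (hkf : IntegrableOn (fun p : α × β => k p.1 p.2 * f p.2) (s ×ˢ t) (μ.prod ν)) :
    ∫ b in t, g b * f b ∂ν = c * ∫ a in s, ∫ b in t, k a b * f b ∂ν ∂μ := by
  rw [IntegrableOn, ← Measure.prod_restrict] at hkf
  calc
    ∫ b in t, g b * f b ∂ν = ∫ b in t, c * ((∫ a in s, k a b ∂μ) * f b) ∂ν :=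
      setIntegral_congr_fun ht fun b hb => by simp only [hg b hb, mul_assoc]
    _ = c * ∫ b in t, (∫ a in s, k a b ∂μ) * f b ∂ν := integral_const_mul _ _
    _ = c * ∫ a in s, ∫ b in t, k a b * f b ∂ν ∂μ := by
      rw [integral_integral_mul_swap hkf]

end Fubini

/-- Uncoupling of the Marchenko system (4.40): the auxiliary relations together with
the two uncoupled equations imply the remaining two coupled equations. -/
theorem marchenko_uncoupling
    (Ω Ωb Ω' Ωb' : ℝ → ℂ)
    (hΩ : ∀ t : ℝ, HasDerivAt Ω (Ω' t) t)
    (hΩb : ∀ t : ℝ, HasDerivAt Ωb (Ωb' t) t)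
    (K₁ K₂ Kb₁ Kb₂ : ℝ × ℝ → ℂ)
    (x y : ℝ) (hxy : x < y)
    (haux₁ : ∀ z : ℝ, x < z →
      Kb₁ (x, z) = Complex.I * ∫ s in Set.Ioi x, K₁ (x, s) * Ω' (s + z))
    (haux₂ : ∀ z : ℝ, x < z →
      K₂ (x, z) = -Complex.I * ∫ s in Set.Ioi x, Kb₂ (x, s) * Ωb' (s + z))
    (huncoup₁ : K₁ (x, y) + Ωb (x + y)
      + Complex.I * ∫ z in Set.Ioi x, ∫ s in Set.Ioi x,
          K₁ (x, z) * Ω' (z + s) * Ωb (s + y) = 0)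
    (huncoup₂ : Kb₂ (x, y) + Ω (x + y)
      - Complex.I * ∫ z in Set.Ioi x, ∫ s in Set.Ioi x,
          Kb₂ (x, z) * Ωb' (z + s) * Ω (s + y) = 0)
    (hint₁ : IntegrableOn
      (fun p : ℝ × ℝ => K₁ (x, p.1) * Ω' (p.1 + p.2) * Ωb (p.2 + y))
      (Set.Ioi x ×ˢ Set.Ioi x))
    (hint₂ : IntegrableOn
      (fun p : ℝ × ℝ => Kb₂ (x, p.1) * Ωb' (p.1 + p.2) * Ω (p.2 + y))
      (Set.Ioi x ×ˢ Set.Ioi x)) :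
    K₁ (x, y) + Ωb (x + y) + (∫ z in Set.Ioi x, Kb₁ (x, z) * Ωb (z + y)) = 0 ∧
    Kb₂ (x, y) + Ω (x + y) + (∫ z in Set.Ioi x, K₂ (x, z) * Ω (z + y)) = 0 := by
  have integral_Kb₁ : ∫ z in Set.Ioi x, Kb₁ (x, z) * Ωb (z + y) =
      Complex.I * ∫ z in Set.Ioi x, ∫ s in Set.Ioi x, K₁ (x, z) * Ω' (z + s) * Ωb (s + y) :=
    setIntegral_mul_of_eq_const_mul_setIntegral measurableSet_Ioi haux₁ hint₁
  have integral_K₂ : ∫ z in Set.Ioi x, K₂ (x, z) * Ω (z + y) =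
      -Complex.I * ∫ z in Set.Ioi x, ∫ s in Set.Ioi x, Kb₂ (x, z) * Ωb' (z + s) * Ω (s + y) :=
    setIntegral_mul_of_eq_const_mul_setIntegral measurableSet_Ioi haux₂ hint₂
  constructor
  · rwa [integral_Kb₁]
  · rwa [integral_K₂, neg_mul, ← sub_eq_add_neg]
end

section
/- (Theorem 5.1, first Marchenko equation.) With the matrix triplet data (A, B, C), (Ā, B̄, C̄) and M, M̄, Γ̄(x), Ω, Ω̄, Ω' as in the context, fix x ∈ ℝ and assume Γ̄(x) is invertible. Define K₁(x, y) := −C̄·e^{−iĀx}·Γ̄(x)^{−1}·e^{−iĀy}·B̄ for y ≥ x. Then for every y > x the reflectionless Marchenko equation holds: K₁(x, y) + Ω̄(x + y) + i·∫_x^∞∫_x^∞ K₁(x, z)·Ω'(z + s)·Ω̄(s + y) ds dz = 0. -/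
open MeasureTheory Matrix

/-- e^{iAt} for a complex square matrix A and real t. -/
noncomputable def eiA {n : ℕ} (A : Matrix (Fin n) (Fin n) ℂ) (t : ℝ) :
    Matrix (Fin n) (Fin n) ℂ :=
  NormedSpace.exp ((Complex.I * t) • A)

/-!
Write `D = -Ā`, so that `e^{iAz}` and `e^{iDz}` both decay exponentially. Because the kernels
`Ω'(z + s)` and `Ω̄(s + y)` are degenerate, the double integral factors: integrating in `s`
produces `J = ∫_x^∞ e^{iAs} B C̄ e^{iDs} ds = e^{iAx} M e^{iDx}`, integrating in `z` produces
`J̄ = ∫_x^∞ e^{iDz} B̄ C e^{iAz} dz = e^{iDx} M̄ e^{iAx}`, and `Γ̄(x) = 1 - J̄ A J`. Hence the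
equation reduces to `-V Γ̄⁻¹ + V + V Γ̄⁻¹ (1 - Γ̄) = 0` with `V = C̄ e^{iDx}`.

The decay comes from the spectral mapping theorem for `exp` and Gelfand's formula for the spectral
radius of `exp a`.
-/

open Filter Asymptotics

section Centralizer

variable {R A : Type*} {s : Set A}

lemma isUnit_coe_centralizer_iff [CommSemiring R] [Semiring A] [Algebra R A]
    {a : Subalgebra.centralizer R s} : IsUnit (a : A) ↔ IsUnit a := by
  refine ⟨fun ⟨u, hu⟩ => ?_, fun ha => ha.map (Subalgebra.val _)⟩
  have inv_mem : ((u⁻¹ : Aˣ) : A) ∈ Subalgebra.centralizer R s := fun g hg =>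
    (show Commute g u from hu ▸ a.2 g hg).units_inv_right
  exact isUnit_iff_exists.mpr
    ⟨⟨_, inv_mem⟩, Subtype.ext (by simp [← hu]), Subtype.ext (by simp [← hu])⟩

lemma spectrum_coe_centralizer [CommRing R] [Ring A] [Algebra R A]
    (a : Subalgebra.centralizer R s) : spectrum R (a : A) = spectrum R a := by
  ext r
  exact not_congr
    (isUnit_coe_centralizer_iff (a := algebraMap R (Subalgebra.centralizer R s) r - a))

end Centralizer

lemma spectrum_exp_of_comm {A : Type*} [NormedCommRing A] [NormedAlgebra ℂ A] [CompleteSpace A]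
    (a : A) : spectrum ℂ (NormedSpace.exp a) = Complex.exp '' spectrum ℂ a := by
  let _ : NormedAlgebra ℚ A := .restrictScalars ℚ ℂ A
  have character_exp (φ : WeakDual.characterSpace ℂ A) :
      φ (NormedSpace.exp a) = Complex.exp (φ a) := by
    rw [Complex.exp_eq_exp_ℂ]
    exact NormedSpace.map_exp φ (map_continuous φ) a
  ext z
  simp [WeakDual.CharacterSpace.mem_spectrum_iff_exists, character_exp]

lemma comp_fract_isBigO_one {E : Type*} [SeminormedAddCommGroup E] {f : ℝ → E}
    (hf : Continuous f) (l : Filter ℝ) : (fun t => f (Int.fract t)) =O[l] fun _ => (1 : ℝ) := by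
  obtain ⟨K, hK⟩ := isCompact_Icc.exists_bound_of_continuousOn (s := Set.Icc (0 : ℝ) 1)
    hf.continuousOn
  exact .of_bound K (.of_forall fun t => by
    simpa using hK _ ⟨Int.fract_nonneg t, (Int.fract_lt_one t).le⟩)

section BanachAlgebra

variable {A : Type*} [NormedRing A] [NormedAlgebra ℂ A] [CompleteSpace A]

-- The bicommutant of `a` is commutative, closed and inverse-closed, so Gelfand theory applies.
theorem spectrum_exp (a : A) :
    spectrum ℂ (NormedSpace.exp a) = Complex.exp '' spectrum ℂ a := by
  let _ : NormedAlgebra ℚ A := .restrictScalars ℚ ℂ A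
  let S := Subalgebra.centralizer ℂ (Set.centralizer {a})
  have mul_comm_S (b c : S) : b * c = c * b :=
    Subtype.ext (c.2 b fun d hd => b.2 d (Set.mem_centralizer_iff.mpr (by simp_all)))
  let _ : NormedCommRing S := { (inferInstance : NormedRing S) with mul_comm := mul_comm_S }
  have : CompleteSpace S := (Set.isClosed_centralizer _).completeSpace_coe
  let _ : NormedAlgebra ℚ S := .restrictScalars ℚ ℂ S
  let a' : S := ⟨a, Set.subset_centralizer_centralizer rfl⟩
  have coe_exp : ((NormedSpace.exp a' : S) : A) = NormedSpace.exp a :=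
    NormedSpace.map_exp S.val continuous_subtype_val a'
  rw [← coe_exp, spectrum_coe_centralizer, spectrum_exp_of_comm, ← spectrum_coe_centralizer]

lemma pow_isBigO_of_spectralRadius_lt {a : A} {r : NNReal} (h : spectralRadius ℂ a < r) :
    (fun k : ℕ => a ^ k) =O[atTop] fun k => (r : ℝ) ^ k := by
  refine .of_bound' ?_
  have gelfand := spectrum.pow_nnnorm_pow_one_div_tendsto_nhds_spectralRadius a
  filter_upwards [gelfand.eventually_lt_const h, eventually_ne_atTop 0] with k hk hk0
  rw [one_div] at hk
  have nnnorm_pow_le := (ENNReal.rpow_inv_le_iff (by positivity)).mp hk.le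
  rw [ENNReal.rpow_natCast] at nnnorm_pow_le
  rw [Real.norm_of_nonneg (by positivity)]
  exact_mod_cast nnnorm_pow_le

lemma spectralRadius_exp_lt {a : A} {ω : ℝ} (h : ∀ z ∈ spectrum ℂ a, z.re < ω) :
    spectralRadius ℂ (NormedSpace.exp a) < (Real.exp ω).toNNReal := by
  rcases subsingleton_or_nontrivial A with _ | _
  · simp [spectralRadius, spectrum.of_subsingleton, Real.exp_pos]
  · refine spectrum.spectralRadius_lt_of_forall_lt _ fun w hw => ?_
    obtain ⟨z, hz, rfl⟩ := (spectrum_exp a).subset hw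
    rw [← NNReal.coe_lt_coe, coe_nnnorm, Complex.norm_exp, Real.coe_toNNReal _ (Real.exp_pos ω).le]
    exact Real.exp_lt_exp.mpr (h z hz)

theorem exp_smul_isBigO {a : A} {ω : ℝ} (h : ∀ z ∈ spectrum ℂ a, z.re < ω) :
    (fun t : ℝ => NormedSpace.exp (t • a)) =O[atTop] fun t => Real.exp (ω * t) := by
  let _ : NormedAlgebra ℚ A := .restrictScalars ℚ ℂ A
  have pow_floor :
      (fun t : ℝ => NormedSpace.exp a ^ ⌊t⌋₊) =O[atTop] fun t => Real.exp ω ^ ⌊t⌋₊ := by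
    simpa [Function.comp_def, (Real.exp_pos ω).le] using
      (pow_isBigO_of_spectralRadius_lt (spectralRadius_exp_lt h)).comp_tendsto
        tendsto_nat_floor_atTop
  have exp_fract := comp_fract_isBigO_one
    (NormedSpace.exp_continuous.comp (continuous_id.smul (continuous_const (y := a)))) atTop
  have rexp_fract := comp_fract_isBigO_one
    (Real.continuous_exp.comp (continuous_const_mul (-ω))) atTop
  have fract_add_floor : ∀ᶠ t : ℝ in atTop, Int.fract t + ⌊t⌋₊ = t :=
    (eventually_ge_atTop 0).mono fun t ht => by
      rw [natCast_floor_eq_intCast_floor ht, Int.fract_add_floor]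
  calc
    (fun t : ℝ => NormedSpace.exp (t • a))
    _ =ᶠ[atTop] fun t => NormedSpace.exp (Int.fract t • a) * NormedSpace.exp a ^ ⌊t⌋₊ := by
      filter_upwards [fract_add_floor] with t ht
      rw [← NormedSpace.exp_nsmul, ← Nat.cast_smul_eq_nsmul ℝ, ← NormedSpace.exp_add_of_commute
        (((Commute.refl a).smul_left _).smul_right _), ← add_smul, ht]
    _ =O[atTop] fun t => 1 * Real.exp ω ^ ⌊t⌋₊ := exp_fract.mul pow_floor
    _ =ᶠ[atTop] fun t => Real.exp (-ω * Int.fract t) * Real.exp (ω * t) := by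
      filter_upwards [fract_add_floor] with t ht
      rw [one_mul, ← Real.exp_nat_mul, ← Real.exp_add]
      congr 1
      linear_combination ω * ht
    _ =O[atTop] fun t => 1 * Real.exp (ω * t) := rexp_fract.mul (isBigO_refl _ _)
    _ = fun t => Real.exp (ω * t) := by simp only [one_mul]

lemma exists_exp_smul_isBigO_exp_neg {a : A} (h : ∀ z ∈ spectrum ℂ a, z.re < 0) :
    ∃ b > 0, (fun t : ℝ => NormedSpace.exp (t • a)) =O[atTop] fun t => Real.exp (-b * t) := by
  obtain ⟨b, hb, hle⟩ := (spectrum.isCompact (𝕜 := ℂ) a).exists_forall_le' (f := fun z => -z.re)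
    (by fun_prop) (a := 0) (by simpa using h)
  exact ⟨b / 2, half_pos hb, exp_smul_isBigO fun z hz => by linarith [hle z hz]⟩

end BanachAlgebra

section MatrixIntegral

variable {α l m n p : Type*} [MeasurableSpace α] {μ : Measure α}

/-- The entrywise integral of a matrix-valued function, standing in for the Bochner integral because
matrices carry no canonical norm. A non-integrable entry integrates to `0`. -/
noncomputable def matrixIntegral {E : Type*} [NormedAddCommGroup E] [NormedSpace ℝ E]
    (μ : Measure α) (F : α → Matrix m n E) : Matrix m n E :=
  of fun i j => ∫ z, F z i j ∂μ

lemma matrixIntegral_restrict_congr {E : Type*} [NormedAddCommGroup E] [NormedSpace ℝ E]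
    {s : Set α} (hs : MeasurableSet s) {F G : α → Matrix m n E} (h : Set.EqOn F G s) :
    matrixIntegral (μ.restrict s) F = matrixIntegral (μ.restrict s) G := by
  ext i j
  exact setIntegral_congr_fun hs fun z hz => congr_fun₂ (h hz) i j

lemma matrixIntegral_const_mul_mul_const {𝕜 : Type*} [RCLike 𝕜] [Fintype m] [Fintype n]
    {F : α → Matrix m n 𝕜} (hF : ∀ i j, Integrable (F · i j) μ)
    (P : Matrix l m 𝕜) (R : Matrix n p 𝕜) :
    matrixIntegral μ (fun z => P * F z * R) = P * matrixIntegral μ F * R := by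
  have integrable_term (i : l) (j : p) (k : n) (k' : m) :
      Integrable (fun z => P i k' * F z k' k * R k j) μ :=
    ((hF k' k).const_mul _).mul_const _
  ext i j
  simp only [matrixIntegral, of_apply, mul_apply, Finset.sum_mul]
  rw [integral_finsetSum _ fun k _ => integrable_finsetSum _ fun k' _ => integrable_term i j k k']
  simp only [integral_finsetSum _ fun k' _ => integrable_term i j _ k', integral_mul_const,
    integral_const_mul]

end MatrixIntegral

section Propagator

variable {m n : ℕ} {A : Matrix (Fin m) (Fin m) ℂ} {D : Matrix (Fin n) (Fin n) ℂ}

lemma eiA_eq_exp_real_smul (A : Matrix (Fin m) (Fin m) ℂ) (t : ℝ) :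
    eiA A t = NormedSpace.exp (t • Complex.I • A) := by
  rw [eiA, mul_comm, mul_smul, Complex.coe_smul]

lemma eiA_add (A : Matrix (Fin m) (Fin m) ℂ) (s t : ℝ) :
    eiA A (s + t) = eiA A s * eiA A t := by
  simp only [eiA_eq_exp_real_smul, add_smul]
  exact Matrix.exp_add_of_commute _ _ (((Commute.refl _).smul_left s).smul_right t)

lemma eiA_neg (A : Matrix (Fin m) (Fin m) ℂ) (t : ℝ) : eiA A (-t) = eiA (-A) t := by
  simp [eiA]

lemma mul_eiA_add (A : Matrix (Fin m) (Fin m) ℂ) (s t : ℝ) :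
    A * eiA A (s + t) = eiA A s * A * eiA A t := by
  have commute : Commute A (eiA A s) := ((Commute.refl A).smul_right _).exp_right
  rw [eiA_add, ← Matrix.mul_assoc, commute.eq]

section Decay

open scoped Matrix.Norms.Operator

lemma continuous_eiA (A : Matrix (Fin m) (Fin m) ℂ) : Continuous (eiA A) :=
  NormedSpace.exp_continuous.comp (by fun_prop)

lemma re_neg_of_mem_spectrum_I_smul (hA : ∀ μ ∈ spectrum ℂ A, 0 < μ.im) :
    ∀ z ∈ spectrum ℂ (Complex.I • A), z.re < 0 := by
  intro z hz
  rw [show Complex.I • A = Units.mk0 _ Complex.I_ne_zero • A from rfl,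
    spectrum.unit_smul_eq_smul] at hz
  obtain ⟨μ, hμ, rfl⟩ := hz
  simpa [Units.smul_def] using hA μ hμ

lemma exists_eiA_apply_isBigO_exp_neg (hA : ∀ μ ∈ spectrum ℂ A, 0 < μ.im) :
    ∃ b > 0, ∀ i j, (fun t => eiA A t i j) =O[atTop] fun t => Real.exp (-b * t) := by
  obtain ⟨b, hb, hO⟩ := exists_exp_smul_isBigO_exp_neg (re_neg_of_mem_spectrum_I_smul hA)
  have eiA_isBigO : eiA A =O[atTop] fun t => Real.exp (-b * t) :=
    hO.congr_left fun t => (eiA_eq_exp_real_smul A t).symm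
  exact ⟨b, hb, fun i j =>
    ((entryLinearMap ℂ ℂ i j).toContinuousLinearMap.isBigO_comp _ _).trans eiA_isBigO⟩

end Decay

lemma integrableOn_eiA_mul_mul_eiA_apply (hA : ∀ μ ∈ spectrum ℂ A, 0 < μ.im)
    (hD : ∀ μ ∈ spectrum ℂ D, 0 < μ.im) (Q : Matrix (Fin m) (Fin n) ℂ) (x : ℝ)
    (i : Fin m) (j : Fin n) :
    IntegrableOn (fun z => (eiA A z * Q * eiA D z) i j) (Set.Ioi x) := by
  obtain ⟨b, hb, hbO⟩ := exists_eiA_apply_isBigO_exp_neg hA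
  obtain ⟨c, hc, hcO⟩ := exists_eiA_apply_isBigO_exp_neg hD
  have hcont : Continuous fun z => (eiA A z * Q * eiA D z) i j :=
    (((continuous_eiA A).matrix_mul continuous_const).matrix_mul (continuous_eiA D)).matrix_elem i j
  have hO : (fun z => (eiA A z * Q * eiA D z) i j) =O[atTop] fun z => Real.exp (-(b + c) * z) := by
    simp only [mul_apply, Finset.sum_mul, neg_add, add_mul, Real.exp_add]
    exact .fun_sum fun k _ => .fun_sum fun l _ =>
      (((hbO i l).mul (isBigO_const_const (Q l k) one_ne_zero _)).mul (hcO k j)).congr_right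
        fun t => by ring
  exact integrable_norm_iff hcont.aestronglyMeasurable |>.mp <|
    integrable_of_isBigO_exp_neg (by positivity) hcont.norm.continuousOn hO.norm_left

/-- The integral `∫_x^∞ e^{iAz} Q e^{iDz} dz`. With `D = -Ā`, the paper's `M` and `M̄` are
`tailIntegral A (B * C̄) D 0` and `tailIntegral D (B̄ * C) A 0`. -/
noncomputable def tailIntegral (A : Matrix (Fin m) (Fin m) ℂ) (Q : Matrix (Fin m) (Fin n) ℂ)
    (D : Matrix (Fin n) (Fin n) ℂ) (x : ℝ) : Matrix (Fin m) (Fin n) ℂ :=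
  matrixIntegral (volume.restrict (Set.Ioi x)) fun z => eiA A z * Q * eiA D z

lemma matrixIntegral_mul_eiA_mul_eiA_mul {p q : Type*} (hA : ∀ μ ∈ spectrum ℂ A, 0 < μ.im)
    (hD : ∀ μ ∈ spectrum ℂ D, 0 < μ.im) (Q : Matrix (Fin m) (Fin n) ℂ) (x : ℝ)
    (P : Matrix p (Fin m) ℂ) (R : Matrix (Fin n) q ℂ) :
    matrixIntegral (volume.restrict (Set.Ioi x)) (fun z => P * (eiA A z * Q * eiA D z) * R) =
      P * tailIntegral A Q D x * R :=
  matrixIntegral_const_mul_mul_const (integrableOn_eiA_mul_mul_eiA_apply hA hD Q x) P R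

lemma tailIntegral_eq_eiA_mul_mul_eiA (hA : ∀ μ ∈ spectrum ℂ A, 0 < μ.im)
    (hD : ∀ μ ∈ spectrum ℂ D, 0 < μ.im) (Q : Matrix (Fin m) (Fin n) ℂ) (x : ℝ) :
    tailIntegral A Q D x = eiA A x * tailIntegral A Q D 0 * eiA D x := by
  rw [← matrixIntegral_mul_eiA_mul_eiA_mul hA hD]
  ext i j
  have shift := (measurePreserving_add_right volume x).setIntegral_preimage_emb
    (measurableEmbedding_addRight x) (fun z => (eiA A z * Q * eiA D z) i j) (Set.Ioi x)
  rw [Set.preimage_add_const_Ioi, sub_self] at shift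
  have eiA_shift (z : ℝ) : eiA A (z + x) * Q * eiA D (z + x) =
      eiA A x * (eiA A z * Q * eiA D z) * eiA D x := by
    rw [add_comm z x, eiA_add A, add_comm x z, eiA_add D]
    simp only [Matrix.mul_assoc]
  simpa only [tailIntegral, matrixIntegral, of_apply, eiA_shift] using shift.symm

lemma tailIntegral_mul_mul_tailIntegral (hA : ∀ μ ∈ spectrum ℂ A, 0 < μ.im)
    (hD : ∀ μ ∈ spectrum ℂ D, 0 < μ.im) (Q : Matrix (Fin m) (Fin n) ℂ)
    (Q' : Matrix (Fin n) (Fin m) ℂ) (x : ℝ) :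
    tailIntegral D Q' A x * A * tailIntegral A Q D x =
      eiA D x * tailIntegral D Q' A 0 * A * eiA A (2 * x) * tailIntegral A Q D 0 * eiA D x := by
  rw [tailIntegral_eq_eiA_mul_mul_eiA hA hD, tailIntegral_eq_eiA_mul_mul_eiA hD hA, two_mul,
    Matrix.mul_assoc _ A (eiA A _), mul_eiA_add]
  simp only [Matrix.mul_assoc]

lemma matrixIntegral_matrixIntegral_marchenko {k l p q : Type*} [Fintype p] [Fintype q]
    (hA : ∀ μ ∈ spectrum ℂ A, 0 < μ.im) (hD : ∀ μ ∈ spectrum ℂ D, 0 < μ.im)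
    (B : Matrix (Fin m) p ℂ) (C : Matrix q (Fin m) ℂ)
    (Bb : Matrix (Fin n) q ℂ) (Cb : Matrix p (Fin n) ℂ)
    (L : Matrix k (Fin n) ℂ) (R : Matrix (Fin n) l ℂ) (x : ℝ) :
    matrixIntegral (volume.restrict (Set.Ioi x)) (fun z =>
        matrixIntegral (volume.restrict (Set.Ioi x)) fun s =>
          L * eiA D z * Bb * (Complex.I • (C * (A * eiA A (z + s)) * B)) * (Cb * eiA D s * R)) =
      Complex.I •
        (L * (tailIntegral D (Bb * C) A x * A * tailIntegral A (B * Cb) D x) * R) := by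
  have integrand_eq (z s : ℝ) :
      L * eiA D z * Bb * (Complex.I • (C * (A * eiA A (z + s)) * B)) * (Cb * eiA D s * R) =
        (L * (eiA D z * (Bb * C) * eiA A z) * (Complex.I • A)) *
          (eiA A s * (B * Cb) * eiA D s) * R := by
    simp only [mul_eiA_add, Matrix.mul_smul, Matrix.smul_mul, Matrix.mul_assoc]
  have outer := matrixIntegral_mul_eiA_mul_eiA_mul hD hA (Bb * C) x L
    (Complex.I • A * tailIntegral A (B * Cb) D x * R)
  simp only [integrand_eq, matrixIntegral_mul_eiA_mul_eiA_mul hA hD]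
  simpa only [Matrix.mul_smul, Matrix.smul_mul, Matrix.mul_assoc] using outer

end Propagator

theorem marchenko_solution_K1_general {m n : ℕ} {p q : Type*} [Fintype p] [Fintype q]
    (A : Matrix (Fin m) (Fin m) ℂ) (hA : ∀ μ ∈ spectrum ℂ A, 0 < μ.im)
    (B : Matrix (Fin m) p ℂ) (C : Matrix q (Fin m) ℂ)
    (Ab : Matrix (Fin n) (Fin n) ℂ) (hAb : ∀ μ ∈ spectrum ℂ Ab, μ.im < 0)
    (Bb : Matrix (Fin n) q ℂ) (Cb : Matrix p (Fin n) ℂ)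
    (M : Matrix (Fin m) (Fin n) ℂ)
    (hM : M = matrixIntegral (volume.restrict (Set.Ioi 0))
      fun z => eiA A z * B * Cb * eiA Ab (-z))
    (Mb : Matrix (Fin n) (Fin m) ℂ)
    (hMb : Mb = matrixIntegral (volume.restrict (Set.Ioi 0))
      fun z => eiA Ab (-z) * Bb * C * eiA A z)
    (x : ℝ) (Γb : Matrix (Fin n) (Fin n) ℂ)
    (hΓb : Γb = 1 - eiA Ab (-x) * Mb * A * eiA A (2 * x) * M * eiA Ab (-x))
    (hΓbinv : IsUnit Γb) (K : ℝ → Matrix p q ℂ)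
    (hK : ∀ y, x ≤ y → K y = -(Cb * eiA Ab (-x) * Γb⁻¹ * eiA Ab (-y) * Bb))
    (y : ℝ) (hy : x ≤ y) :
    K y + Cb * eiA Ab (-(x + y)) * Bb
      + Complex.I • matrixIntegral (volume.restrict (Set.Ioi x)) (fun z =>
          matrixIntegral (volume.restrict (Set.Ioi x)) fun s =>
            K z * (Complex.I • (C * (A * eiA A (z + s)) * B)) * (Cb * eiA Ab (-(s + y)) * Bb))
      = 0 := by
  have hD : ∀ μ ∈ spectrum ℂ (-Ab), 0 < μ.im := fun μ hμ => by
    simpa using hAb (-μ) (by rwa [← spectrum.neg_eq] at hμ)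
  simp only [eiA_neg, Matrix.mul_assoc _ B Cb, Matrix.mul_assoc _ Bb C] at hM hMb hΓb hK ⊢
  set D := -Ab
  set L := -(Cb * eiA D x * Γb⁻¹) with hL
  have tail_mul_A_mul_tail :
      tailIntegral D (Bb * C) A x * A * tailIntegral A (B * Cb) D x = 1 - Γb := by
    rw [tailIntegral_mul_mul_tailIntegral hA hD, hΓb, sub_sub_cancel, hM, hMb]
    rfl
  have L_mul_one_sub : L * (1 - Γb) = L + Cb * eiA D x := by
    rw [Matrix.mul_sub, Matrix.mul_one, hL, Matrix.neg_mul _ Γb, sub_neg_eq_add,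
      nonsing_inv_mul_cancel_right _ _ ((isUnit_iff_isUnit_det _).mp hΓbinv)]
  have kernel_eq (z : ℝ) (hz : x ≤ z) : K z = L * eiA D z * Bb := by
    simp only [hK z hz, hL, Matrix.neg_mul]
  have double_integral : matrixIntegral (volume.restrict (Set.Ioi x)) (fun z =>
      matrixIntegral (volume.restrict (Set.Ioi x)) fun s =>
        K z * (Complex.I • (C * (A * eiA A (z + s)) * B)) * (Cb * eiA D (s + y) * Bb)) =
      Complex.I • ((L + Cb * eiA D x) * (eiA D y * Bb)) := by
    rw [← L_mul_one_sub, ← tail_mul_A_mul_tail, ← matrixIntegral_matrixIntegral_marchenko hA hD]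
    refine matrixIntegral_restrict_congr measurableSet_Ioi fun z hz => ?_
    simp only [kernel_eq z (le_of_lt hz), eiA_add D, Matrix.mul_assoc]
  rw [double_integral, kernel_eq y hy, eiA_add, smul_smul, Complex.I_mul_I, neg_one_smul,
    Matrix.add_mul]
  simp only [Matrix.mul_assoc, add_neg_cancel]

/-- Theorem 5.1, first Marchenko equation: the explicit kernel
K₁(x,y) = −C̄ e^{-iĀx} Γ̄(x)⁻¹ e^{-iĀy} B̄ solves the reflectionless Marchenko equation. -/
theorem marchenko_solution_K1
    (𝒩 𝒩b : ℕ)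
    (A : Matrix (Fin 𝒩) (Fin 𝒩) ℂ) (hA : ∀ μ ∈ spectrum ℂ A, 0 < μ.im)
    (B : Matrix (Fin 𝒩) (Fin 1) ℂ) (C : Matrix (Fin 1) (Fin 𝒩) ℂ)
    (Ab : Matrix (Fin 𝒩b) (Fin 𝒩b) ℂ) (hAb : ∀ μ ∈ spectrum ℂ Ab, μ.im < 0)
    (Bb : Matrix (Fin 𝒩b) (Fin 1) ℂ) (Cb : Matrix (Fin 1) (Fin 𝒩b) ℂ)
    (M : Matrix (Fin 𝒩) (Fin 𝒩b) ℂ)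
    (hM : ∀ i j, M i j = ∫ z in Set.Ioi (0 : ℝ), (eiA A z * B * Cb * eiA Ab (-z)) i j)
    (Mb : Matrix (Fin 𝒩b) (Fin 𝒩) ℂ)
    (hMb : ∀ i j, Mb i j = ∫ z in Set.Ioi (0 : ℝ), (eiA Ab (-z) * Bb * C * eiA A z) i j)
    (x : ℝ)
    (Γb : Matrix (Fin 𝒩b) (Fin 𝒩b) ℂ)
    (hΓb : Γb = 1 - eiA Ab (-x) * Mb * A * eiA A (2 * x) * M * eiA Ab (-x))
    (hΓbinv : IsUnit Γb)
    (K₁ : ℝ → ℂ)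
    (hK₁ : ∀ y : ℝ, x ≤ y →
      K₁ y = -((Cb * eiA Ab (-x) * Γb⁻¹ * eiA Ab (-y) * Bb) 0 0)) :
    ∀ y : ℝ, x < y →
      K₁ y + (Cb * eiA Ab (-(x + y)) * Bb) 0 0
        + Complex.I * ∫ z in Set.Ioi x, ∫ s in Set.Ioi x,
            K₁ z * (Complex.I * ((C * (A * eiA A (z + s)) * B) 0 0))
              * ((Cb * eiA Ab (-(s + y)) * Bb) 0 0) = 0 := by
  intro y hy
  have matrix_eq := marchenko_solution_K1_general A hA B C Ab hAb Bb Cb M (Matrix.ext hM) Mb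
    (Matrix.ext hMb) x Γb hΓb hΓbinv (fun y => of fun _ _ => K₁ y)
    (fun y hy => by ext i j; simpa [Fin.fin_one_eq_zero] using hK₁ y hy) y hy.le
  simpa [matrixIntegral, mul_apply (m := Fin 1), mul_left_comm] using congr_fun₂ matrix_eq 0 0
end

section
/- (Theorem 5.5, analytic core: equal number of bound states in the reflectionless case.) Let c ∈ ℂ with c ≠ 0. Let λ₁, …, λ_N be points in the open upper half-plane with positive integer multiplicities m₁, …, m_N, and λ̄₁, …, λ̄_{N̄} points in the open lower half-plane with positive integer multiplicities m̄₁, …, m̄_{N̄}. Let g : ℂ → ℂ be continuous on the closed upper half-plane {Im λ ≥ 0}, complex differentiable on the open upper half-plane, nonvanishing on the closed upper half-plane, and suppose there exist constants K, R > 0 with |g(λ) − c| ≤ K/|λ| for all λ with Im λ ≥ 0 and |λ| ≥ R. Let ḡ : ℂ → ℂ be continuous on the closed lower half-plane, complex differentiable on the open lower half-plane, nonvanishing on the closed lower half-plane, with |ḡ(λ) − 1/c| ≤ K/|λ| for all λ with Im λ ≤ 0 and |λ| ≥ R. If for every real λ one has (1/(g(λ)·ḡ(λ))) · ∏_{j=1}^{N}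 ((λ − conj(λ_j))/(λ − λ_j))^{m_j} · ∏_{k=1}^{N̄} ((λ − conj(λ̄_k))/(λ − λ̄_k))^{m̄_k} = 1, then ∑_{j=1}^{N} m_j = ∑_{k=1}^{N̄} m̄_k. -/
open Complex

/-!
Write `P, Q` for the monic polynomials with roots `λ_j, λ̄_k`, and `P*, Q*` for those with the
conjugate roots. On the real line the hypothesis reads `P* / (g Q) = ḡ P / Q*`. The left side is
zero-free and holomorphic in the upper half-plane, the right side in the lower one, so they glue
(Painlevé, via Morera) to a zero-free entire function `F` with `|F z| ≍ |z| ^ (∑ m_j - ∑ m̄_k)` at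
infinity. By Liouville applied to `F` and to `1 / F`, the exponent vanishes.
-/

open Asymptotics Bornology Filter Set Topology

section Painleve

variable {E : Type*} [NormedAddCommGroup E] [NormedSpace ℂ E] {F : ℂ → E} {t : ℝ}

theorem wedgeIntegral_add_wedgeIntegral_eq_zero_of_im_eq (hF : Continuous F)
    (hd : ∀ z : ℂ, z.im ≠ t → DifferentiableAt ℂ F z) {z w : ℂ} (h : z.im = t ∨ w.im = t) :
    wedgeIntegral z w F + wedgeIntegral w z F = 0 := by
  rw [wedgeIntegral_add_wedgeIntegral_eq]
  refine integral_boundary_rect_eq_zero_of_continuousOn_of_differentiableOn F z w hF.continuousOn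
    fun x hx ↦ (hd x ?_).differentiableWithinAt
  have hx_im : min z.im w.im < x.im ∧ x.im < max z.im w.im := hx.2
  grind

theorem wedgeIntegral_add_wedgeIntegral_eq_add (hF : Continuous F) (z w : ℂ) (t : ℝ) :
    wedgeIntegral z w F + wedgeIntegral w z F =
      (wedgeIntegral z ⟨w.re, t⟩ F + wedgeIntegral ⟨w.re, t⟩ z F) +
        (wedgeIntegral ⟨z.re, t⟩ w F + wedgeIntegral w ⟨z.re, t⟩ F) := by
  have vertical_integrable (x a b : ℝ) :
      IntervalIntegrable (fun y : ℝ ↦ F (x + y * I)) MeasureTheory.volume a b :=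
    Continuous.intervalIntegrable (by fun_prop) a b
  have vertical_split (x : ℝ) : ∫ y : ℝ in z.im..w.im, F (x + y * I) =
      (∫ y : ℝ in z.im..t, F (x + y * I)) + ∫ y : ℝ in t..w.im, F (x + y * I) :=
    (intervalIntegral.integral_add_adjacent_intervals (vertical_integrable x z.im t)
      (vertical_integrable x t w.im)).symm
  simp only [wedgeIntegral_add_wedgeIntegral_eq, vertical_split]
  module

theorem differentiable_of_continuous_of_differentiableAt_of_im_ne [CompleteSpace E]
    (hF : Continuous F) (hd : ∀ z : ℂ, z.im ≠ t → DifferentiableAt ℂ F z) :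
    Differentiable ℂ F := by
  have conservative : IsConservativeOn F univ := fun z w _ ↦ by
    rw [← add_eq_zero_iff_eq_neg, wedgeIntegral_add_wedgeIntegral_eq_add hF z w t,
      wedgeIntegral_add_wedgeIntegral_eq_zero_of_im_eq hF hd (.inr rfl),
      wedgeIntegral_add_wedgeIntegral_eq_zero_of_im_eq hF hd (.inl rfl), add_zero]
  exact differentiableOn_univ.1 <|
    (isConservativeOn_and_continuousOn_iff_isDifferentiableOn isOpen_univ).1
      ⟨conservative, hF.continuousOn⟩

theorem exists_differentiable_eqOn_of_eq_on_real [CompleteSpace E] {A B : ℂ → E}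
    (hA : DiffContOnCl ℂ A {z | 0 < z.im}) (hB : DiffContOnCl ℂ B {z | z.im < 0})
    (hAB : ∀ x : ℝ, A x = B x) :
    ∃ F : ℂ → E, Differentiable ℂ F ∧
      EqOn F A (closure {z | 0 < z.im}) ∧ EqOn F B (closure {z | z.im < 0}) := by
  have eq_of_im_eq_zero (z : ℂ) (hz : 0 = z.im) : A z = B z := by
    have z_real : (z.re : ℂ) = z := Complex.ext rfl hz
    exact z_real ▸ hAB z.re
  let F : ℂ → E := fun z ↦ if 0 ≤ z.im then A z else B z
  have F_eq_A {z : ℂ} (hz : 0 ≤ z.im) : F z = A z := if_pos hz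
  have F_eq_B {z : ℂ} (hz : z.im ≤ 0) : F z = B z := by
    rcases hz.lt_or_eq with hneg | hzero
    · exact if_neg hneg.not_ge
    · exact (F_eq_A hzero.ge).trans (eq_of_im_eq_zero z hzero.symm)
  have F_continuous : Continuous F := by
    refine continuous_if_le continuous_const continuous_im ?_ ?_ eq_of_im_eq_zero
    · simpa only [closure_setOfPred_lt_im] using hA.continuousOn
    · simpa only [closure_setOfPred_im_lt] using hB.continuousOn
  have F_differentiableAt (z : ℂ) (hz : z.im ≠ 0) : DifferentiableAt ℂ F z := by
    rcases hz.lt_or_gt with hneg | hpos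
    · have lower_open : IsOpen {z : ℂ | z.im < 0} := isOpen_lt continuous_im continuous_const
      exact (hB.differentiableAt lower_open hneg).congr_of_eventuallyEq <|
        (lower_open.eventually_mem hneg).mono fun _ hw ↦ F_eq_B (le_of_lt hw)
    · have upper_open : IsOpen {z : ℂ | 0 < z.im} := isOpen_lt continuous_const continuous_im
      exact (hA.differentiableAt upper_open hpos).congr_of_eventuallyEq <|
        (upper_open.eventually_mem hpos).mono fun _ hw ↦ F_eq_A (le_of_lt hw)
  refine ⟨F, differentiable_of_continuous_of_differentiableAt_of_im_ne F_continuous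
    F_differentiableAt, ?_, ?_⟩
  · exact closure_setOfPred_lt_im 0 ▸ fun _ hz ↦ F_eq_A hz
  · exact closure_setOfPred_im_lt 0 ▸ fun _ hz ↦ F_eq_B hz

end Painleve

/-- `f` is holomorphic in `S`, continuous and without zeros on `closure S`, and of exact order
`|z| ^ n` as `z → ∞` in `closure S`. The last condition is void when `S` is bounded. -/
structure IsZeroFreeOfOrder (f : ℂ → ℂ) (S : Set ℂ) (n : ℤ) : Prop where
  diffContOnCl : DiffContOnCl ℂ f S
  ne_zero : ∀ z ∈ closure S, f z ≠ 0
  isTheta : f =Θ[cobounded ℂ ⊓ 𝓟 (closure S)] fun z ↦ z ^ n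

namespace IsZeroFreeOfOrder

variable {f g A B : ℂ → ℂ} {S T : Set ℂ} {n k : ℤ}

theorem mul (hf : IsZeroFreeOfOrder f S n) (hg : IsZeroFreeOfOrder g S k) :
    IsZeroFreeOfOrder (f * g) S (n + k) where
  diffContOnCl := hf.diffContOnCl.smul hg.diffContOnCl
  ne_zero z hz := mul_ne_zero (hf.ne_zero z hz) (hg.ne_zero z hz)
  isTheta := (hf.isTheta.mul hg.isTheta).trans_eventuallyEq <|
    ((eventually_ne_cobounded 0).filter_mono inf_le_left).mono fun _ hz ↦ (zpow_add₀ hz n k).symm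

theorem inv (hf : IsZeroFreeOfOrder f S n) : IsZeroFreeOfOrder f⁻¹ S (-n) where
  diffContOnCl := hf.diffContOnCl.inv hf.ne_zero
  ne_zero z hz := inv_ne_zero (hf.ne_zero z hz)
  isTheta := by
    simp only [zpow_neg]
    exact hf.isTheta.inv

theorem div (hf : IsZeroFreeOfOrder f S n) (hg : IsZeroFreeOfOrder g S k) :
    IsZeroFreeOfOrder (f / g) S (n - k) := by
  simpa only [div_eq_mul_inv, sub_eq_add_neg] using hf.mul hg.inv

theorem of_norm_sub_le {c : ℂ} {K R : ℝ} (hST : closure S = T) (hcont : ContinuousOn f T)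
    (hdiff : ∀ z ∈ S, DifferentiableAt ℂ f z) (hne : ∀ z ∈ T, f z ≠ 0) (hc : c ≠ 0)
    (hasymp : ∀ z ∈ T, R ≤ ‖z‖ → ‖f z - c‖ ≤ K / ‖z‖) :
    IsZeroFreeOfOrder f S 0 := by
  subst hST
  have norm_atTop : Tendsto norm (cobounded ℂ ⊓ 𝓟 (closure S)) atTop :=
    tendsto_norm_cobounded_atTop.mono_left inf_le_left
  have tendsto_c : Tendsto f (cobounded ℂ ⊓ 𝓟 (closure S)) (𝓝 c) := by
    rw [tendsto_iff_norm_sub_tendsto_zero]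
    refine squeeze_zero' (.of_forall fun _ ↦ norm_nonneg _) ?_ (norm_atTop.const_div_atTop K)
    filter_upwards [mem_inf_of_right (mem_principal_self _), norm_atTop.eventually_ge_atTop R]
      using hasymp
  refine ⟨⟨fun z hz ↦ (hdiff z hz).differentiableWithinAt, hcont⟩, hne, ?_⟩
  simp only [zpow_zero]
  exact ((isEquivalent_const_iff_tendsto hc).2 tendsto_c).isTheta.trans
    (isTheta_const_const hc one_ne_zero)

theorem nonneg_of_univ (hf : IsZeroFreeOfOrder f univ n) : 0 ≤ n := by
  by_contra! hn
  have zpow_tendsto : Tendsto (fun z : ℂ ↦ z ^ n) (cobounded ℂ) (𝓝 0) := by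
    lift -n to ℕ using by omega with d hd
    obtain rfl : n = -d := by omega
    simpa [show d ≠ 0 by omega] using (tendsto_inv₀_cobounded (α := ℂ)).pow d
  have f_isTheta : f =Θ[cobounded ℂ] fun z ↦ z ^ n := by simpa using hf.isTheta
  have f_tendsto : Tendsto f (cocompact ℂ) (𝓝 0) :=
    Metric.cobounded_eq_cocompact (α := ℂ) ▸ f_isTheta.tendsto_zero_iff.2 zpow_tendsto
  exact hf.ne_zero 0 (by simp) <|
    (diffContOnCl_univ.1 hf.diffContOnCl).apply_eq_of_tendsto_cocompact 0 f_tendsto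

theorem eq_zero_of_univ (hf : IsZeroFreeOfOrder f univ n) : n = 0 :=
  le_antisymm (neg_nonneg.1 hf.inv.nonneg_of_univ) hf.nonneg_of_univ

theorem eq_zero_of_eq_on_real (hA : IsZeroFreeOfOrder A {z | 0 < z.im} n)
    (hB : IsZeroFreeOfOrder B {z | z.im < 0} n) (hAB : ∀ x : ℝ, A x = B x) : n = 0 := by
  obtain ⟨F, F_differentiable, F_eq_A, F_eq_B⟩ :=
    exists_differentiable_eqOn_of_eq_on_real hA.diffContOnCl hB.diffContOnCl hAB
  have cover : closure {z : ℂ | 0 < z.im} ∪ closure {z : ℂ | z.im < 0} = univ := by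
    simp only [closure_setOfPred_lt_im, closure_setOfPred_im_lt]
    exact eq_univ_of_forall fun z ↦ le_total 0 z.im
  refine eq_zero_of_univ (f := F) ⟨diffContOnCl_univ.2 F_differentiable, fun z _ ↦ ?_, ?_⟩
  · rcases cover.ge (mem_univ z) with hz | hz
    · exact F_eq_A hz ▸ hA.ne_zero z hz
    · exact F_eq_B hz ▸ hB.ne_zero z hz
  · rw [closure_univ, ← cover, ← sup_principal, inf_sup_left]
    exact ((F_eq_A.eventuallyEq.filter_mono inf_le_right).trans_isTheta hA.isTheta).sup
      ((F_eq_B.eventuallyEq.filter_mono inf_le_right).trans_isTheta hB.isTheta)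

end IsZeroFreeOfOrder

section RootProduct

variable {ι : Type*} [Fintype ι]

/-- The value at `z` of the monic polynomial with roots `a i` of multiplicities `m i`. -/
def rootProduct (a : ι → ℂ) (m : ι → ℕ) (z : ℂ) : ℂ :=
  ∏ i, (z - a i) ^ m i

theorem prod_div_pow_eq_rootProduct_div (a b : ι → ℂ) (m : ι → ℕ) (z : ℂ) :
    ∏ i, ((z - a i) / (z - b i)) ^ m i = rootProduct a m z / rootProduct b m z := by
  simp only [rootProduct, div_pow, Finset.prod_div_distrib]

theorem isZeroFreeOfOrder_rootProduct {S : Set ℂ} {a : ι → ℂ} (ha : ∀ i, a i ∉ closure S)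
    (m : ι → ℕ) : IsZeroFreeOfOrder (rootProduct a m) S ((∑ i, m i : ℕ) : ℤ) where
  diffContOnCl := Differentiable.diffContOnCl (by unfold rootProduct; fun_prop)
  ne_zero z hz := Finset.prod_ne_zero_iff.2 fun i _ ↦
    pow_ne_zero _ (sub_ne_zero.2 fun hza ↦ ha i (hza ▸ hz))
  isTheta := by
    have factor_isTheta (i : ι) : (fun z ↦ z - a i) =Θ[cobounded ℂ] id :=
      (IsEquivalent.refl.sub_isLittleO (isLittleO_const_id_cobounded (a i))).isTheta
    simp only [zpow_natCast, ← Finset.prod_pow_eq_pow_sum]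
    exact (IsTheta.finsetProd fun i _ ↦ (factor_isTheta i).pow (m i)).mono inf_le_left

theorem sum_eq_sum_of_rootProduct_mul_rootProduct_eq {κ : Type*} [Fintype κ]
    {a a' : ι → ℂ} {b b' : κ → ℂ} {g h : ℂ → ℂ} (m : ι → ℕ) (n : κ → ℕ)
    (ha : ∀ i, 0 < (a i).im) (ha' : ∀ i, (a' i).im < 0)
    (hb : ∀ k, (b k).im < 0) (hb' : ∀ k, 0 < (b' k).im)
    (hg : IsZeroFreeOfOrder g {z | 0 < z.im} 0) (hh : IsZeroFreeOfOrder h {z | z.im < 0} 0)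
    (hreal : ∀ t : ℝ, rootProduct a' m t * rootProduct b' n t =
      g t * h t * rootProduct a m t * rootProduct b n t) :
    ∑ i, m i = ∑ k, n k := by
  have a_order : IsZeroFreeOfOrder (rootProduct a m) {z | z.im < 0} _ :=
    isZeroFreeOfOrder_rootProduct (by simpa [closure_setOfPred_im_lt] using ha) m
  have a'_order : IsZeroFreeOfOrder (rootProduct a' m) {z | 0 < z.im} _ :=
    isZeroFreeOfOrder_rootProduct (by simpa [closure_setOfPred_lt_im] using ha') m
  have b_order : IsZeroFreeOfOrder (rootProduct b n) {z | 0 < z.im} _ :=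
    isZeroFreeOfOrder_rootProduct (by simpa [closure_setOfPred_lt_im] using hb) n
  have b'_order : IsZeroFreeOfOrder (rootProduct b' n) {z | z.im < 0} _ :=
    isZeroFreeOfOrder_rootProduct (by simpa [closure_setOfPred_im_lt] using hb') n
  have upper_order := a'_order.div (hg.mul b_order)
  have lower_order := (hh.mul a_order).div b'_order
  rw [zero_add] at upper_order lower_order
  have order_eq_zero := upper_order.eq_zero_of_eq_on_real lower_order fun t ↦ by
    have mem_upper : (t : ℂ) ∈ closure {z : ℂ | 0 < z.im} := by simp [closure_setOfPred_lt_im]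
    have mem_lower : (t : ℂ) ∈ closure {z : ℂ | z.im < 0} := by simp [closure_setOfPred_im_lt]
    refine (div_eq_div_iff ((hg.mul b_order).ne_zero t mem_upper)
      (b'_order.ne_zero t mem_lower)).2 ?_
    simp only [Pi.mul_apply]
    linear_combination hreal t
  omega

end RootProduct

theorem reflectionless_equal_bound_states_general {ι κ : Type*} [Fintype ι] [Fintype κ]
    {lam : ι → ℂ} (hlam : ∀ j, 0 < (lam j).im) (m : ι → ℕ)
    {lamb : κ → ℂ} (hlamb : ∀ k, (lamb k).im < 0) (mb : κ → ℕ) {g gb : ℂ → ℂ}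
    (hg : IsZeroFreeOfOrder g {z | 0 < z.im} 0) (hgb : IsZeroFreeOfOrder gb {z | z.im < 0} 0)
    (hid : ∀ t : ℝ,
      (1 / (g t * gb t))
        * (∏ j, (((t : ℂ) - starRingEnd ℂ (lam j)) / ((t : ℂ) - lam j)) ^ (m j))
        * (∏ k, (((t : ℂ) - starRingEnd ℂ (lamb k)) / ((t : ℂ) - lamb k)) ^ (mb k)) = 1) :
    ∑ j, m j = ∑ k, mb k := by
  refine sum_eq_sum_of_rootProduct_mul_rootProduct_eq m mb
    (a' := fun j ↦ starRingEnd ℂ (lam j)) (b' := fun k ↦ starRingEnd ℂ (lamb k))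
    hlam (by simpa using hlam) hlamb (by simpa using hlamb) hg hgb fun t ↦ ?_
  refine eq_of_div_eq_one (Eq.trans ?_ (hid t))
  rw [prod_div_pow_eq_rootProduct_div, prod_div_pow_eq_rootProduct_div]
  ring

/-- Theorem 5.5, analytic core: in the reflectionless case the total number of
bound-state poles (with multiplicity) in the upper half-plane equals that in the
lower half-plane. -/
theorem reflectionless_equal_bound_states
    (c : ℂ) (hc : c ≠ 0)
    (N Nb : ℕ)
    (lam : Fin N → ℂ) (hlam : ∀ j, 0 < (lam j).im)
    (m : Fin N → ℕ) (hm : ∀ j, 0 < m j)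
    (lamb : Fin Nb → ℂ) (hlamb : ∀ k, (lamb k).im < 0)
    (mb : Fin Nb → ℕ) (hmb : ∀ k, 0 < mb k)
    (g gb : ℂ → ℂ)
    (hgcont : ContinuousOn g {z : ℂ | 0 ≤ z.im})
    (hgdiff : ∀ z : ℂ, 0 < z.im → DifferentiableAt ℂ g z)
    (hgne : ∀ z : ℂ, 0 ≤ z.im → g z ≠ 0)
    (hgbcont : ContinuousOn gb {z : ℂ | z.im ≤ 0})
    (hgbdiff : ∀ z : ℂ, z.im < 0 → DifferentiableAt ℂ gb z)
    (hgbne : ∀ z : ℂ, z.im ≤ 0 → gb z ≠ 0)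
    (K R : ℝ) (hK : 0 < K) (hR : 0 < R)
    (hgasy : ∀ z : ℂ, 0 ≤ z.im → R ≤ ‖z‖ → ‖g z - c‖ ≤ K / ‖z‖)
    (hgbasy : ∀ z : ℂ, z.im ≤ 0 → R ≤ ‖z‖ →
      ‖gb z - 1 / c‖ ≤ K / ‖z‖)
    (hid : ∀ t : ℝ,
      (1 / (g t * gb t))
        * (∏ j, (((t : ℂ) - starRingEnd ℂ (lam j)) / ((t : ℂ) - lam j)) ^ (m j))
        * (∏ k, (((t : ℂ) - starRingEnd ℂ (lamb k)) / ((t : ℂ) - lamb k)) ^ (mb k)) = 1) :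
    ∑ j, m j = ∑ k, mb k :=
  reflectionless_equal_bound_states_general hlam m hlamb mb
    (.of_norm_sub_le (closure_setOfPred_lt_im 0) hgcont hgdiff hgne hc hgasy)
    (.of_norm_sub_le (closure_setOfPred_im_lt 0) hgbcont hgbdiff hgbne (one_div_ne_zero hc) hgbasy)
    hid
end

section
/- (Example 6.3, verification that ψ solves (1.1).) With q, r, art as in the context, let ζ ∈ ℂ with λ := ζ² ≠ −2i, and define ψ₁(ζ, x) := −9ζ·exp(iλx + 2x − 2·art(1/3 − i·e^{6x})) / ((λ + 2i)·(2 + 3i·e^{6x})) and ψ₂(ζ, x) := (4(λ − i) − 3i·e^{6x}·(λ + 2i))·exp(iλx + 2·art(1/3 − i·e^{6x})) / ((λ + 2i)·(−4 + 3i·e^{6x})). Then for every x ∈ ℝ the pair (ψ₁(ζ,·), ψ₂(ζ,·)) is a solution of system (1.1) with potentials q, r and spectral parameter ζ: ∂ψ₁/∂x = −iζ²·ψ₁ + ζ·q(x)·ψ₂ and ∂ψ₂/∂x = ζ·r(x)·ψ₁ + iζ²·ψ₂. -/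
/-- Principal inverse hyperbolic tangent. -/
noncomputable def art (w : ℂ) : ℂ :=
  (Complex.log (1 + w) - Complex.log (1 - w)) / 2

/-- The potential q of Example 6.3. -/
noncomputable def qEx (x : ℝ) : ℂ :=
  18 / (3 * Complex.exp (6 * x) - 2 * Complex.I)
    * Complex.exp (2 * x - 4 * art (1 / 3 - Complex.I * Complex.exp (6 * x)))

/-- The potential r of Example 6.3. -/
noncomputable def rEx (x : ℝ) : ℂ :=
  12 / (3 * Complex.exp (6 * x) + 4 * Complex.I)
    * Complex.exp (4 * x + 4 * art (1 / 3 - Complex.I * Complex.exp (6 * x)))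

/-- The first component of the Jost solution ψ of Example 6.3. -/
noncomputable def ψ₁Ex (ζ : ℂ) (x : ℝ) : ℂ :=
  -9 * ζ * Complex.exp (Complex.I * ζ ^ 2 * x + 2 * x
      - 2 * art (1 / 3 - Complex.I * Complex.exp (6 * x)))
    / ((ζ ^ 2 + 2 * Complex.I) * (2 + 3 * Complex.I * Complex.exp (6 * x)))

/-- The second component of the Jost solution ψ of Example 6.3. -/
noncomputable def ψ₂Ex (ζ : ℂ) (x : ℝ) : ℂ :=
  (4 * (ζ ^ 2 - Complex.I) - 3 * Complex.I * Complex.exp (6 * x) * (ζ ^ 2 + 2 * Complex.I))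
    * Complex.exp (Complex.I * ζ ^ 2 * x
      + 2 * art (1 / 3 - Complex.I * Complex.exp (6 * x)))
    / ((ζ ^ 2 + 2 * Complex.I) * (-4 + 3 * Complex.I * Complex.exp (6 * x)))

/-!
Put `w = 1/3 - i e^{6x}`, so that `dw/dx = 6w - 2`, and `λ = ζ²`. Since `exp (2 art w)` equals
`(1 + w)/(1 - w)`, no logarithm survives:
`ψ₁ = -3ζ e^{(iλ+2)x} / ((λ+2i)(1+w))` and `ψ₂ = e^{iλx} (1 - 2λ / ((λ+2i)(1-w)))`,
with `q = 6i e^{2x} (1-w)/(1+w)²` and `r = -4i e^{4x} (1+w)/(1-w)²`. The logarithmic derivative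
of `ψ₁` is `iλ - 4 + 8/(1+w)`, which matches the first equation because
`ζ q ψ₂ = (2iλ - 4 + 8/(1+w)) ψ₁`, and differentiating the bracket in `ψ₂` contributes exactly
`ζ r ψ₁` to the second.
-/

section

open Complex

theorem exp_two_mul_art {w : ℂ} (h_add : 1 + w ≠ 0) (h_sub : 1 - w ≠ 0) :
    exp (2 * art w) = (1 + w) / (1 - w) := by
  rw [art, mul_div_cancel₀ _ two_ne_zero, exp_sub, exp_log h_add, exp_log h_sub]

theorem exp_four_mul_art {w : ℂ} (h_add : 1 + w ≠ 0) (h_sub : 1 - w ≠ 0) :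
    exp (4 * art w) = ((1 + w) / (1 - w)) ^ 2 := by
  rw [← exp_two_mul_art h_add h_sub, ← exp_nat_mul]
  ring_nf

theorem hasDerivAt_cexp_mul_ofReal (c : ℂ) (x : ℝ) :
    HasDerivAt (fun y : ℝ => exp (c * y)) (exp (c * x) * c) x := by
  simpa using ((hasDerivAt_id (x : ℂ)).const_mul c).cexp.comp_ofReal

/-- The argument `1/3 - i e^{6x}` at which Example 6.3 evaluates `art`. The denominators
`2 + 3i e^{6x}` and `4 - 3i e^{6x}` of the example are `3 (1 - w)` and `3 (1 + w)` for this `w`. -/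
noncomputable def artArg (x : ℝ) : ℂ := 1 / 3 - I * exp (6 * x)

theorem artArg_re (x : ℝ) : (artArg x).re = 1 / 3 := by
  have exp_im : (exp (6 * x)).im = 0 := by exact_mod_cast exp_ofReal_im (6 * x)
  simp [artArg, exp_im]

theorem one_add_artArg_ne_zero (x : ℝ) : 1 + artArg x ≠ 0 := by
  intro h
  have h_re := congrArg re h
  norm_num [artArg_re] at h_re

theorem one_sub_artArg_ne_zero (x : ℝ) : 1 - artArg x ≠ 0 := by
  intro h
  have h_re := congrArg re h
  norm_num [artArg_re] at h_re

theorem hasDerivAt_artArg (x : ℝ) : HasDerivAt artArg (6 * artArg x - 2) x := by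
  refine (((hasDerivAt_cexp_mul_ofReal 6 x).const_mul I).const_sub (1 / 3)).congr_deriv ?_
  rw [artArg]
  ring

theorem qEx_eq (x : ℝ) :
    qEx x = 6 * I * exp (2 * x) * (1 - artArg x) / (1 + artArg x) ^ 2 := by
  have h_add := one_add_artArg_ne_zero x
  have h_sub := one_sub_artArg_ne_zero x
  have denom_eq : 3 * exp (6 * x) - 2 * I = -3 * I * (1 - artArg x) := by
    rw [artArg]
    linear_combination 3 * exp (6 * x) * I_sq
  rw [qEx, ← artArg, denom_eq, exp_sub, exp_four_mul_art h_add h_sub]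
  field_simp
  linear_combination -18 * I_sq

theorem rEx_eq (x : ℝ) :
    rEx x = -4 * I * exp (4 * x) * (1 + artArg x) / (1 - artArg x) ^ 2 := by
  have h_add := one_add_artArg_ne_zero x
  have h_sub := one_sub_artArg_ne_zero x
  have denom_eq : 3 * exp (6 * x) + 4 * I = 3 * I * (1 + artArg x) := by
    rw [artArg]
    linear_combination 3 * exp (6 * x) * I_sq
  rw [rEx, ← artArg, denom_eq, exp_add, exp_four_mul_art h_add h_sub]
  field_simp
  linear_combination 12 * I_sq

theorem ψ₁Ex_eq (ζ : ℂ) (x : ℝ) :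
    ψ₁Ex ζ x =
      -3 * ζ / (ζ ^ 2 + 2 * I) * (exp ((I * ζ ^ 2 + 2) * x) / (1 + artArg x)) := by
  have h_add := one_add_artArg_ne_zero x
  have h_sub := one_sub_artArg_ne_zero x
  have denom_eq : 2 + 3 * I * exp (6 * x) = 3 * (1 - artArg x) := by
    rw [artArg]
    ring
  rw [ψ₁Ex, ← artArg, denom_eq, exp_sub, exp_two_mul_art h_add h_sub, ← add_mul]
  field_simp
  ring

theorem ψ₂Ex_eq {ζ : ℂ} (hζ : ζ ^ 2 + 2 * I ≠ 0) (x : ℝ) :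
    ψ₂Ex ζ x =
      exp (I * ζ ^ 2 * x) * (1 - 2 * ζ ^ 2 / (ζ ^ 2 + 2 * I) / (1 - artArg x)) := by
  have h_add := one_add_artArg_ne_zero x
  have h_sub := one_sub_artArg_ne_zero x
  have denom_eq : -4 + 3 * I * exp (6 * x) = -3 * (1 + artArg x) := by
    rw [artArg]
    ring
  have num_eq : 4 * (ζ ^ 2 - I) - 3 * I * exp (6 * x) * (ζ ^ 2 + 2 * I) =
      6 * ζ ^ 2 - 3 * (ζ ^ 2 + 2 * I) * (1 - artArg x) := by
    rw [artArg]
    ring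
  rw [ψ₂Ex, ← artArg, denom_eq, num_eq, exp_add, exp_two_mul_art h_add h_sub]
  field_simp
  ring

theorem hasDerivAt_ψ₁Ex (ζ : ℂ) (x : ℝ) :
    HasDerivAt (ψ₁Ex ζ) ((I * ζ ^ 2 - 4 + 8 / (1 + artArg x)) * ψ₁Ex ζ x) x := by
  have h_add := one_add_artArg_ne_zero x
  rw [funext (ψ₁Ex_eq ζ)]
  refine (((hasDerivAt_cexp_mul_ofReal (I * ζ ^ 2 + 2) x).fun_div
    ((hasDerivAt_artArg x).const_add 1) h_add).const_mul _).congr_deriv ?_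
  field_simp
  ring

theorem mul_qEx_mul_ψ₂Ex {ζ : ℂ} (hζ : ζ ^ 2 + 2 * I ≠ 0) (x : ℝ) :
    ζ * qEx x * ψ₂Ex ζ x = (2 * I * ζ ^ 2 - 4 + 8 / (1 + artArg x)) * ψ₁Ex ζ x := by
  have h_add := one_add_artArg_ne_zero x
  have h_sub := one_sub_artArg_ne_zero x
  rw [qEx_eq, ψ₂Ex_eq hζ, ψ₁Ex_eq, add_mul (I * ζ ^ 2), exp_add]
  generalize hμ : ζ ^ 2 + 2 * I = μ at hζ ⊢
  field_simp
  linear_combination -6 * ζ * I * (1 - artArg x) * hμ + 12 * ζ * (1 - artArg x) * I_sq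

theorem hasDerivAt_ψ₂Ex {ζ : ℂ} (hζ : ζ ^ 2 + 2 * I ≠ 0) (x : ℝ) :
    HasDerivAt (ψ₂Ex ζ)
      (I * ζ ^ 2 * ψ₂Ex ζ x - exp (I * ζ ^ 2 * x) *
        (2 * ζ ^ 2 / (ζ ^ 2 + 2 * I) * (6 * artArg x - 2) / (1 - artArg x) ^ 2)) x := by
  have h_sub := one_sub_artArg_ne_zero x
  rw [funext (ψ₂Ex_eq hζ)]
  refine ((hasDerivAt_cexp_mul_ofReal (I * ζ ^ 2) x).fun_mul
    (((hasDerivAt_const x (2 * ζ ^ 2 / (ζ ^ 2 + 2 * I))).fun_div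
      ((hasDerivAt_artArg x).const_sub 1) h_sub).const_sub 1)).congr_deriv ?_
  ring

theorem mul_rEx_mul_ψ₁Ex (ζ : ℂ) (x : ℝ) :
    ζ * rEx x * ψ₁Ex ζ x = -(exp (I * ζ ^ 2 * x) *
      (2 * ζ ^ 2 / (ζ ^ 2 + 2 * I) * (6 * artArg x - 2) / (1 - artArg x) ^ 2)) := by
  have h_add := one_add_artArg_ne_zero x
  have exp_mul_exp : exp (4 * x) * exp (2 * x) = exp (6 * x) := by
    rw [← exp_add]
    ring_nf
  have deriv_eq : 6 * artArg x - 2 = -6 * I * (exp (4 * x) * exp (2 * x)) := by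
    rw [exp_mul_exp, artArg]
    ring
  rw [rEx_eq, ψ₁Ex_eq, deriv_eq, add_mul (I * ζ ^ 2), exp_add]
  field_simp
  ring

end

/-- Example 6.3: the pair (ψ₁, ψ₂) solves system (1.1) with potentials qEx, rEx. -/
theorem example63_psi_solves
    (ζ : ℂ) (hζ : ζ ^ 2 ≠ -2 * Complex.I) :
    ∀ x : ℝ,
      HasDerivAt (fun x => ψ₁Ex ζ x)
        (-Complex.I * ζ ^ 2 * ψ₁Ex ζ x + ζ * qEx x * ψ₂Ex ζ x) x ∧
      HasDerivAt (fun x => ψ₂Ex ζ x)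
        (ζ * rEx x * ψ₁Ex ζ x + Complex.I * ζ ^ 2 * ψ₂Ex ζ x) x := by
  intro x
  have hζ_add : ζ ^ 2 + 2 * Complex.I ≠ 0 := fun h => hζ (by linear_combination h)
  constructor
  · refine (hasDerivAt_ψ₁Ex ζ x).congr_deriv ?_
    rw [mul_qEx_mul_ψ₂Ex hζ_add]
    ring
  · refine (hasDerivAt_ψ₂Ex hζ_add x).congr_deriv ?_
    rw [mul_rEx_mul_ψ₁Ex]
    ring
end
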